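/- Let q be a prime power and let ν, m₁, m₂, t be positive integers with m₁ > m₂ ≥ t+1 and 2ν ≥ 2m₁ + m₂ + 2. Then c₁(ν,m₁,m₂,t) > c₁(ν,m₂,m₁,t) and c₂(ν,m₁,m₂,t) > c₂(ν,m₂,m₁,t). -/

import Mathlib

open Finset Module

noncomputable section

/-- Gaussian binomial coefficient `[n choose k]_q` as a rational number. -/
def gaussBinom (q n k : ℕ) : ℚ :=
  ∏ i ∈ Finset.range k, ((q : ℚ) ^ ((n : ℤ) - i) - 1) / ((q : ℚ) ^ ((k : ℤ) - i) - 1)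

/-- `N'(a; m; 2ν)`, the number of `m`-dim totally isotropic subspaces containing
a fixed `a`-dim one. -/
def Nprime (q a m ν : ℕ) : ℚ :=
  ∏ i ∈ Finset.Icc 1 (m - a), ((q : ℚ) ^ (2 * ((ν : ℤ) - m + i)) - 1) / ((q : ℚ) ^ (i : ℤ) - 1)

variable {K V : Type*} [Field K] [AddCommGroup V] [Module K V]

/-- A subspace is totally isotropic w.r.t. the bilinear form `f`. -/
def TotallyIsotropic (f : V →ₗ[K] V →ₗ[K] K) (W : Submodule K V) : Prop :=
  ∀ x ∈ W, ∀ y ∈ W, f x y = 0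

/-- `polar f m` = `𝒫_m`, the set of `m`-dimensional totally isotropic subspaces. -/
def polar (f : V →ₗ[K] V →ₗ[K] K) (m : ℕ) : Set (Submodule K V) :=
  {W | TotallyIsotropic f W ∧ finrank K W = m}

/-- `X` is a `t`-cover of the family `ℱ`. -/
def IsTCover (f : V →ₗ[K] V →ₗ[K] K) (t : ℕ) (ℱ : Set (Submodule K V))
    (X : Submodule K V) : Prop :=
  TotallyIsotropic f X ∧ ∀ F ∈ ℱ, t ≤ finrank K ↥(X ⊓ F)

/-- `τ_t(ℱ)`, the minimum dimension of a `t`-cover of `ℱ`. -/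
def tauCover (f : V →ₗ[K] V →ₗ[K] K) (t : ℕ) (ℱ : Set (Submodule K V)) : ℕ :=
  sInf {x | ∃ X, IsTCover f t ℱ X ∧ finrank K ↥X = x}

def C1 (f : V →ₗ[K] V →ₗ[K] K) (M T : Submodule K V) (m t : ℕ) : Set (Submodule K V) :=
  {F | F ∈ polar f m ∧ T ≤ F ∧ t + 1 ≤ finrank K ↥(F ⊓ M)}

def C2 (f : V →ₗ[K] V →ₗ[K] K) (M T : Submodule K V) (m : ℕ) : Set (Submodule K V) :=
  {F | F ∈ polar f m ∧ T ≤ F} ∪ {F | F ∈ polar f m ∧ F ≤ M}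

def C3 (f : V →ₗ[K] V →ₗ[K] K) (S : Submodule K V) (m : ℕ) : Set (Submodule K V) :=
  {F | F ∈ polar f m ∧ S ≤ F}

def C4 (f : V →ₗ[K] V →ₗ[K] K) (S : Submodule K V) (m t : ℕ) : Set (Submodule K V) :=
  {F | F ∈ polar f m ∧ t ≤ finrank K ↥(F ⊓ S)}

def s0 (q ν m s t : ℕ) : ℚ :=
  gaussBinom q (s - t) 1 * Nprime q (t + 1) m ν - q * gaussBinom q (s - t) 2 * Nprime q (t + 2) m ν

/-!
Write `q = |K|`. Counting pairs `R ≤ F` with `R` one dimension above `T` in two ways shows that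
an `a`-dimensional totally isotropic subspace lies in exactly `N'(a; m)` members of `𝒫_m`.
Counting the members of `𝒫_m` through `T` by their intersection with `M` then gives, for
`dim M = s` and `dim T = t`,
`s0 ≤ |𝒞₁| ≤ [s-t, 1] N'(t+1; m)` and `N'(t; m) ≤ |𝒞₂| ≤ N'(t; m) + [m+1, 1]`,
as well as exact formulas for `|𝒞₃|` and `|𝒞₄|`.

After division by the common factors, the inequality for `c₂` says that `1 / (q ^ (m - t) - 1)`
decreases in `m`. The inequality for `c₁` compares the values of `(q ^ (x + 1) - 1) / (q ^ x - 1)`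
at `x = m₂ - t` and `x = m₁ - t`. This function decreases, with a gap of at least
`1 / (2 (q ^ (m₂ - t) - 1))`, whereas the relative errors in the bounds above are at most
`1 / (3 q ^ m₁)` and `1 / (16 q ^ m₁)` because `2ν ≥ 2m₁ + m₂ + 2`.
-/

section GaussianBinomials

theorem gaussBinom_zero_right (q n : ℕ) : gaussBinom q n 0 = 1 := by
  simp [gaussBinom]

theorem gaussBinom_one_right (q n : ℕ) :
    gaussBinom q n 1 = ((q : ℚ) ^ n - 1) / ((q : ℚ) - 1) := by
  simp [gaussBinom]

theorem gaussBinom_succ_right (q n k : ℕ) :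
    gaussBinom q n (k + 1) =
      ((q : ℚ) ^ n - 1) / ((q : ℚ) ^ (k + 1) - 1) * gaussBinom q (n - 1) k := by
  rw [gaussBinom, Finset.prod_range_succ', mul_comm]
  rcases n with _ | n
  · simp
  · congr 1
    refine Finset.prod_congr rfl fun i _ => ?_
    rw [show ((n + 1 : ℕ) : ℤ) - (i + 1 : ℕ) = (n : ℤ) - i by omega,
      show ((k + 1 : ℕ) : ℤ) - (i + 1 : ℕ) = (k : ℤ) - i by omega, Nat.add_sub_cancel]

theorem gaussBinom_eq_zero_of_lt {q n k : ℕ} (h : n < k) : gaussBinom q n k = 0 := by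
  induction k generalizing n with
  | zero => omega
  | succ k ih =>
    rcases n with _ | n
    · simp [gaussBinom_succ_right]
    · rw [gaussBinom_succ_right, Nat.add_sub_cancel, ih (by omega), mul_zero]

variable {q : ℕ}

theorem natCast_pow_sub_one_pos (hq : 1 < q) {n : ℕ} (hn : n ≠ 0) :
    (0 : ℚ) < (q : ℚ) ^ n - 1 :=
  sub_pos.2 (one_lt_pow₀ (by exact_mod_cast hq) hn)

theorem natCast_sub_one_pos (hq : 1 < q) : (0 : ℚ) < (q : ℚ) - 1 :=
  sub_pos.2 (by exact_mod_cast hq)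

theorem gaussBinom_one_nonneg (hq : 1 < q) (n : ℕ) : 0 ≤ gaussBinom q n 1 := by
  rw [gaussBinom_one_right]
  exact div_nonneg (sub_nonneg.2 (one_le_pow₀ (by exact_mod_cast hq.le)))
    (natCast_sub_one_pos hq).le

theorem gaussBinom_one_pos (hq : 1 < q) {n : ℕ} (hn : n ≠ 0) : 0 < gaussBinom q n 1 := by
  rw [gaussBinom_one_right]
  exact div_pos (natCast_pow_sub_one_pos hq hn) (natCast_sub_one_pos hq)

theorem gaussBinom_one_succ (hq : 1 < q) (n : ℕ) :
    gaussBinom q (n + 1) 1 = q * gaussBinom q n 1 + 1 := by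
  have := (natCast_sub_one_pos hq).ne'
  rw [gaussBinom_one_right, gaussBinom_one_right]
  field_simp
  ring

theorem one_le_gaussBinom_one_succ (hq : 1 < q) (n : ℕ) : 1 ≤ gaussBinom q (n + 1) 1 := by
  rw [gaussBinom_one_succ hq]
  exact le_add_of_nonneg_left (mul_nonneg q.cast_nonneg (gaussBinom_one_nonneg hq n))

theorem gaussBinom_one_le_pow (hq : 1 < q) (n : ℕ) : gaussBinom q n 1 ≤ (q : ℚ) ^ n := by
  have hq' : (2 : ℚ) ≤ q := by exact_mod_cast hq
  have hpow : (0 : ℚ) < (q : ℚ) ^ n := by positivity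
  rw [gaussBinom_one_right, div_le_iff₀ (natCast_sub_one_pos hq)]
  nlinarith

theorem gaussBinom_two_right (hq : 1 < q) (n : ℕ) :
    gaussBinom q n 2 = gaussBinom q n 1 * gaussBinom q (n - 1) 1 / (q + 1) := by
  have hfactor : (q : ℚ) ^ (1 + 1) - 1 = (q - 1) * (q + 1) := by ring
  rw [gaussBinom_succ_right, hfactor, gaussBinom_one_right q n]
  field_simp

theorem gaussBinom_succ_self (hq : 1 < q) (n : ℕ) :
    gaussBinom q (n + 1) n = gaussBinom q (n + 1) 1 := by
  induction n with
  | zero => rw [gaussBinom_zero_right, gaussBinom_one_succ hq, gaussBinom_eq_zero_of_lt one_pos,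
      mul_zero, zero_add]
  | succ n ih =>
    have := (natCast_pow_sub_one_pos hq n.succ_ne_zero).ne'
    rw [gaussBinom_succ_right, Nat.add_sub_cancel, ih, gaussBinom_one_right,
      gaussBinom_one_right]
    field_simp

theorem gaussBinom_self (hq : 1 < q) (n : ℕ) : gaussBinom q n n = 1 := by
  induction n with
  | zero => exact gaussBinom_zero_right q 0
  | succ n ih =>
    rw [gaussBinom_succ_right, Nat.add_sub_cancel, ih, mul_one,
      div_self (natCast_pow_sub_one_pos hq n.succ_ne_zero).ne']

-- The Bonferroni-type inequality behind the lower bound `s0`.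
theorem gaussBinom_one_sub_mul_gaussBinom_two_le_one (hq : 1 < q) (n : ℕ) :
    gaussBinom q n 1 - q * gaussBinom q n 2 ≤ 1 := by
  rcases n with _ | _ | n
  · norm_num [gaussBinom_eq_zero_of_lt]
  · rw [zero_add, gaussBinom_self hq, gaussBinom_eq_zero_of_lt one_lt_two, mul_zero, sub_zero]
  · have hx := one_le_gaussBinom_one_succ hq n
    rw [gaussBinom_two_right hq, gaussBinom_one_succ hq (n + 1), Nat.add_sub_cancel]
    set x := gaussBinom q (n + 1) 1
    have hdiff : q * x + 1 - q * ((q * x + 1) * x / (q + 1)) =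
        1 - q ^ 2 * x * (x - 1) / (q + 1) := by
      field_simp
      ring
    have : 0 ≤ q ^ 2 * x * (x - 1) / (q + 1) := by positivity
    linarith

end GaussianBinomials

section IsotropicCounts

variable {q a m ν : ℕ}

theorem Nprime_self (q m ν : ℕ) : Nprime q m m ν = 1 := by
  simp [Nprime]

theorem Nprime_eq_mul_Nprime_succ (ham : a < m) (haν : a ≤ ν) :
    Nprime q a m ν =
      ((q : ℚ) ^ (2 * (ν - a)) - 1) / ((q : ℚ) ^ (m - a) - 1) * Nprime q (a + 1) m ν := by
  obtain ⟨k, rfl⟩ := Nat.exists_eq_add_of_lt ham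
  rw [Nprime, Nprime, show a + k + 1 - a = k + 1 by omega, show a + k + 1 - (a + 1) = k by omega,
    Finset.prod_Icc_succ_top (by omega), mul_comm,
    show 2 * ((ν : ℤ) - (a + k + 1 : ℕ) + (k + 1 : ℕ)) = (2 * (ν - a) : ℕ) by omega,
    zpow_natCast, zpow_natCast]

theorem pow_sub_le_pow_sub_one_div (hq : 1 < q) {i j : ℕ} (hi : i ≠ 0) (hij : i ≤ j) :
    (q : ℚ) ^ (j - i) ≤ ((q : ℚ) ^ j - 1) / ((q : ℚ) ^ i - 1) := by
  have hle : (1 : ℚ) ≤ (q : ℚ) ^ (j - i) := one_le_pow₀ (by exact_mod_cast hq.le)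
  rw [le_div_iff₀ (natCast_pow_sub_one_pos hq hi), mul_sub, ← pow_add, Nat.sub_add_cancel hij]
  linarith

theorem Nprime_pos (hq : 1 < q) (hm : m ≤ ν) : 0 < Nprime q a m ν := by
  refine Finset.prod_pos fun i hi => ?_
  have hi := Finset.mem_Icc.1 hi
  rw [show 2 * ((ν : ℤ) - m + i) = (2 * (ν - m + i) : ℕ) by omega, zpow_natCast, zpow_natCast]
  exact div_pos (natCast_pow_sub_one_pos hq (by omega)) (natCast_pow_sub_one_pos hq (by omega))

theorem pow_mul_Nprime_succ_le (hq : 1 < q) (ham : a < m) (hm : m ≤ ν) :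
    (q : ℚ) ^ (2 * ν - a - m) * Nprime q (a + 1) m ν ≤ Nprime q a m ν := by
  rw [Nprime_eq_mul_Nprime_succ ham (by omega),
    show 2 * ν - a - m = 2 * (ν - a) - (m - a) by omega]
  exact mul_le_mul_of_nonneg_right (pow_sub_le_pow_sub_one_div hq (by omega) (by omega))
    (Nprime_pos hq hm).le

theorem one_le_Nprime (hq : 1 < q) (hm : m ≤ ν) (ham : a ≤ m) : 1 ≤ Nprime q a m ν := by
  induction ham using Nat.decreasingInduction with
  | self => exact (Nprime_self q m ν).ge
  | of_succ a ham ih =>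
    refine le_trans ?_ (pow_mul_Nprime_succ_le hq ham hm)
    exact one_le_mul_of_one_le_of_one_le (one_le_pow₀ (by exact_mod_cast hq.le)) ih

end IsotropicCounts

section Estimates

variable {q ν m s t : ℕ}

theorem mul_gaussBinom_two_le (hq : 1 < q) (n : ℕ) :
    q * gaussBinom q n 2 ≤ gaussBinom q n 1 * ((q : ℚ) ^ n / 3) := by
  have hq' : (2 : ℚ) ≤ q := by exact_mod_cast hq
  have hone := gaussBinom_one_nonneg hq n
  rcases n with _ | n
  · norm_num [gaussBinom_eq_zero_of_lt]
  have hpred : q * gaussBinom q n 1 / (q + 1) ≤ (q : ℚ) ^ (n + 1) / 3 := by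
    have hq₁ := natCast_sub_one_pos hq
    rw [gaussBinom_one_right, pow_succ', ← mul_div_assoc, div_div,
      div_le_div_iff₀ (by positivity) (by norm_num), mul_assoc, mul_assoc]
    gcongr
    · linarith
    · nlinarith
  calc q * gaussBinom q (n + 1) 2
      = gaussBinom q (n + 1) 1 * (q * gaussBinom q n 1 / (q + 1)) := by
        rw [gaussBinom_two_right hq, Nat.add_sub_cancel]; ring
    _ ≤ gaussBinom q (n + 1) 1 * ((q : ℚ) ^ (n + 1) / 3) :=
        mul_le_mul_of_nonneg_left hpred hone

theorem le_s0 (hq : 1 < q) (htm : t + 1 < m) (hts : t ≤ s) (hν : 2 * m + s + 1 ≤ 2 * ν) :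
    gaussBinom q (s - t) 1 * Nprime q (t + 1) m ν * (1 - 1 / (3 * (q : ℚ) ^ m)) ≤
      s0 q ν m s t := by
  have hP : 0 < Nprime q (t + 2) m ν := Nprime_pos hq (by omega)
  have hstep : (q : ℚ) ^ (s - t) * (q : ℚ) ^ m * Nprime q (t + 2) m ν ≤ Nprime q (t + 1) m ν := by
    refine le_trans ?_ (pow_mul_Nprime_succ_le hq htm (by omega))
    rw [← pow_add]
    exact mul_le_mul_of_nonneg_right
      (pow_le_pow_right₀ (by exact_mod_cast hq.le) (by omega)) hP.le
  have hsecond : q * gaussBinom q (s - t) 2 * Nprime q (t + 2) m ν ≤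
      gaussBinom q (s - t) 1 * Nprime q (t + 1) m ν * (1 / (3 * (q : ℚ) ^ m)) :=
    calc q * gaussBinom q (s - t) 2 * Nprime q (t + 2) m ν
        ≤ gaussBinom q (s - t) 1 * ((q : ℚ) ^ (s - t) / 3) * Nprime q (t + 2) m ν :=
          mul_le_mul_of_nonneg_right (mul_gaussBinom_two_le hq _) hP.le
      _ = gaussBinom q (s - t) 1 *
            ((q : ℚ) ^ (s - t) * (q : ℚ) ^ m * Nprime q (t + 2) m ν) * (1 / (3 * (q : ℚ) ^ m)) := by
          field_simp
      _ ≤ _ := by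
          have := gaussBinom_one_nonneg hq (s - t)
          gcongr
  rw [s0]
  linarith

theorem gaussBinom_succ_one_le_Nprime (hq : 1 < q) (htm : t + 2 ≤ m)
    (hν : 2 * m + t + 3 ≤ 2 * ν) :
    gaussBinom q (m + 1) 1 ≤ Nprime q t m ν * (1 / (16 * (q : ℚ) ^ m)) := by
  have hq' : (2 : ℚ) ≤ q := by exact_mod_cast hq
  have hexp : (q : ℚ) ^ (2 * m + 5) ≤ Nprime q t m ν :=
    calc (q : ℚ) ^ (2 * m + 5)
        ≤ (q : ℚ) ^ (2 * ν - t - m) * ((q : ℚ) ^ (2 * ν - (t + 1) - m) * 1) := by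
          rw [mul_one, ← pow_add]
          exact pow_le_pow_right₀ (by linarith) (by omega)
      _ ≤ (q : ℚ) ^ (2 * ν - t - m) *
            ((q : ℚ) ^ (2 * ν - (t + 1) - m) * Nprime q (t + 2) m ν) := by
          gcongr
          exact one_le_Nprime hq (by omega) htm
      _ ≤ (q : ℚ) ^ (2 * ν - t - m) * Nprime q (t + 1) m ν := by
          gcongr
          exact pow_mul_Nprime_succ_le hq (by omega) (by omega)
      _ ≤ Nprime q t m ν := pow_mul_Nprime_succ_le hq (by omega) (by omega)
  calc gaussBinom q (m + 1) 1 ≤ (q : ℚ) ^ (m + 1) := gaussBinom_one_le_pow hq _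
    _ = 2 ^ 4 * (q : ℚ) ^ (m + 1) * (q : ℚ) ^ m * (1 / (16 * (q : ℚ) ^ m)) := by
        field_simp; norm_num
    _ ≤ (q : ℚ) ^ 4 * (q : ℚ) ^ (m + 1) * (q : ℚ) ^ m * (1 / (16 * (q : ℚ) ^ m)) := by gcongr
    _ = (q : ℚ) ^ (2 * m + 5) * (1 / (16 * (q : ℚ) ^ m)) := by ring
    _ ≤ _ := by gcongr

theorem mul_sub_one_div_gap {x b y : ℚ} (hx : 2 ≤ x) (hb : 1 < b) (hby : x * b ≤ y) :
    (x * y - 1) / (y - 1) + 1 / (2 * (b - 1)) ≤ (x * b - 1) / (b - 1) := by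
  have hy : 2 * b ≤ y := by nlinarith
  have hb₁ : 0 < b - 1 := by linarith
  have hy₁ : 0 < y - 1 := by linarith
  rw [div_add_div _ _ hy₁.ne' (by positivity), div_le_div_iff₀ (by positivity) hb₁]
  have hgap : y - 1 ≤ 2 * ((x - 1) * (y - b)) := by nlinarith
  nlinarith [mul_le_mul_of_nonneg_right hgap hb₁.le]

theorem mul_sub_one_div_perturbed_lt {x b y δ : ℚ} (hx : 2 ≤ x) (hb : 1 < b) (hby : x * b ≤ y)
    (hδ₀ : 0 ≤ δ) (hδ : y * δ ≤ 1) :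
    (x * y - 1) / (y - 1) * (1 + δ / 16) < (x * b - 1) / (b - 1) * (1 - δ / 3) := by
  have hb₁ : 0 < b - 1 := by linarith
  have hy₁ : 0 < y - 1 := by nlinarith
  have hgap := mul_sub_one_div_gap hx hb hby
  have hxbδ : x * b * δ ≤ 1 := (mul_le_mul_of_nonneg_right hby hδ₀).trans hδ
  have herr₁ : (x * y - 1) / (y - 1) * (δ / 16) ≤ 1 / (8 * (b - 1)) := by
    have hratio : (x * y - 1) / (y - 1) ≤ 2 * x := by
      rw [div_le_iff₀ hy₁]
      nlinarith
    calc (x * y - 1) / (y - 1) * (δ / 16) ≤ 2 * x * (δ / 16) := by gcongr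
      _ ≤ 1 / (8 * (b - 1)) := by
        rw [le_div_iff₀ (by positivity)]
        nlinarith
  have herr₂ : (x * b - 1) / (b - 1) * (δ / 3) ≤ 1 / (3 * (b - 1)) := by
    rw [div_mul_div_comm, mul_comm (b - 1)]
    gcongr
    linarith
  have hslack : 1 / (8 * (b - 1)) + 1 / (3 * (b - 1)) < 1 / (2 * (b - 1)) := by
    rw [← sub_pos]
    field_simp
    norm_num
  linarith

theorem Nprime_succ_mul_Nprime_lt {m₁ m₂ : ℕ} (hq : 1 < q) (hmt : t + 1 ≤ m₂) (hm : m₂ < m₁)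
    (hν : m₁ ≤ ν) :
    Nprime q (t + 1) m₂ ν * Nprime q t m₁ ν < Nprime q (t + 1) m₁ ν * Nprime q t m₂ ν := by
  have hq' : (1 : ℚ) < q := by exact_mod_cast hq
  have hfactor : ((q : ℚ) ^ (2 * (ν - t)) - 1) / ((q : ℚ) ^ (m₁ - t) - 1) <
      ((q : ℚ) ^ (2 * (ν - t)) - 1) / ((q : ℚ) ^ (m₂ - t) - 1) := by
    refine div_lt_div_of_pos_left (natCast_pow_sub_one_pos hq (by omega))
      (natCast_pow_sub_one_pos hq (by omega)) ?_
    exact sub_lt_sub_right (pow_lt_pow_right₀ hq' (by omega)) 1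
  have hprod : 0 < Nprime q (t + 1) m₂ ν * Nprime q (t + 1) m₁ ν :=
    mul_pos (Nprime_pos hq (by omega)) (Nprime_pos hq hν)
  rw [Nprime_eq_mul_Nprime_succ (a := t) (m := m₁) (by omega) (by omega),
    Nprime_eq_mul_Nprime_succ (a := t) (m := m₂) (by omega) (by omega)]
  linear_combination mul_lt_mul_of_pos_right hfactor hprod

theorem pow_sub_one_div_perturbed_lt {i j m : ℕ} (hq : 1 < q) (hi : i ≠ 0) (hij : i < j)
    (hjm : j ≤ m) :
    ((q : ℚ) ^ (j + 1) - 1) / ((q : ℚ) ^ j - 1) * (1 + 1 / (q : ℚ) ^ m / 16) <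
      ((q : ℚ) ^ (i + 1) - 1) / ((q : ℚ) ^ i - 1) * (1 - 1 / (q : ℚ) ^ m / 3) := by
  have hq' : (2 : ℚ) ≤ q := by exact_mod_cast hq
  rw [pow_succ', pow_succ']
  refine mul_sub_one_div_perturbed_lt hq' (one_lt_pow₀ (by linarith) hi) ?_ (by positivity) ?_
  · rw [← pow_succ']
    exact pow_le_pow_right₀ (by linarith) hij
  · rw [mul_one_div, div_le_one₀ (by positivity)]
    exact pow_le_pow_right₀ (by linarith) hjm

theorem gaussBinom_mul_Nprime_lt_s0_mul_Nprime {m₁ m₂ : ℕ} (hq : 1 < q) (hmt : t + 1 ≤ m₂)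
    (hm : m₂ < m₁) (hν : 2 * m₁ + m₂ + 2 ≤ 2 * ν) :
    gaussBinom q (m₁ + 1 - t) 1 * Nprime q (t + 1) m₂ ν *
        (Nprime q t m₁ ν + gaussBinom q (m₁ + 1) 1) <
      s0 q ν m₁ (m₂ + 1) t * Nprime q t m₂ ν := by
  have hN : 0 < Nprime q (t + 1) m₁ ν := Nprime_pos hq (by omega)
  have hR : 0 < Nprime q (t + 1) m₂ ν := Nprime_pos hq (by omega)
  have hQ := natCast_pow_sub_one_pos (n := 2 * (ν - t)) hq (by omega)
  have hratio := pow_sub_one_div_perturbed_lt (i := m₂ - t) (j := m₁ - t) hq (by omega) (by omega)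
    (Nat.sub_le m₁ t)
  calc gaussBinom q (m₁ + 1 - t) 1 * Nprime q (t + 1) m₂ ν *
        (Nprime q t m₁ ν + gaussBinom q (m₁ + 1) 1)
      ≤ gaussBinom q (m₁ + 1 - t) 1 * Nprime q (t + 1) m₂ ν *
          (Nprime q t m₁ ν + Nprime q t m₁ ν * (1 / (16 * (q : ℚ) ^ m₁))) := by
        have := gaussBinom_one_nonneg hq (m₁ + 1 - t)
        gcongr
        exact gaussBinom_succ_one_le_Nprime hq (by omega) (by omega)
    _ = ((q : ℚ) ^ (2 * (ν - t)) - 1) / ((q : ℚ) - 1) * Nprime q (t + 1) m₁ ν *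
          Nprime q (t + 1) m₂ ν * (((q : ℚ) ^ (m₁ - t + 1) - 1) / ((q : ℚ) ^ (m₁ - t) - 1) *
            (1 + 1 / (q : ℚ) ^ m₁ / 16)) := by
        rw [Nprime_eq_mul_Nprime_succ (a := t) (m := m₁) (by omega) (by omega),
          gaussBinom_one_right, show m₁ + 1 - t = m₁ - t + 1 by omega]
        ring
    _ < ((q : ℚ) ^ (2 * (ν - t)) - 1) / ((q : ℚ) - 1) * Nprime q (t + 1) m₁ ν *
          Nprime q (t + 1) m₂ ν * (((q : ℚ) ^ (m₂ - t + 1) - 1) / ((q : ℚ) ^ (m₂ - t) - 1) *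
            (1 - 1 / (q : ℚ) ^ m₁ / 3)) := by
        have := natCast_sub_one_pos hq
        gcongr
    _ = gaussBinom q (m₂ + 1 - t) 1 * Nprime q (t + 1) m₁ ν * (1 - 1 / (3 * (q : ℚ) ^ m₁)) *
          Nprime q t m₂ ν := by
        rw [Nprime_eq_mul_Nprime_succ (a := t) (m := m₂) (by omega) (by omega),
          gaussBinom_one_right, show m₂ + 1 - t = m₂ - t + 1 by omega]
        ring
    _ ≤ s0 q ν m₁ (m₂ + 1) t * Nprime q t m₂ ν := by
        gcongr
        · exact (Nprime_pos hq (by omega)).le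
        · exact le_s0 hq (by omega) (by omega) (by omega)

end Estimates

section SubspacesBetween

/-- The `k`-dimensional subspaces `S` with `W ≤ S ≤ U`, where `k` is the dimension of `S` itself
and not its codimension over `W`. They are the objects counted by Gaussian binomials. -/
def subspacesBetween (W U : Submodule K V) (k : ℕ) : Set (Submodule K V) :=
  {S | W ≤ S ∧ S ≤ U ∧ finrank K S = k}

theorem sup_span_singleton_eq_of_finrank_eq_succ [FiniteDimensional K V] {W S : Submodule K V}
    (hWS : W ≤ S) (hS : finrank K S = finrank K W + 1) {v : V} (hvS : v ∈ S) (hvW : v ∉ W) :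
    W ⊔ Submodule.span K {v} = S :=
  Submodule.eq_of_le_of_finrank_eq
    (sup_le hWS ((Submodule.span_singleton_le_iff_mem v S).2 hvS))
    (by rw [Submodule.finrank_sup_span_singleton hvW, hS])

variable [Finite V]

theorem sum_ncard_subspacesBetween (𝒜 : Set (Submodule K V)) (W U : Submodule K V) (k : ℕ) :
    ∑ F ∈ 𝒜.toFinite.toFinset, (subspacesBetween W (F ⊓ U) k).ncard =
      ∑ R ∈ (subspacesBetween W U k).toFinite.toFinset, {F ∈ 𝒜 | R ≤ F}.ncard := by
  classical
  convert Finset.sum_card_bipartiteAbove_eq_sum_card_bipartiteBelow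
    (s := 𝒜.toFinite.toFinset) (t := (subspacesBetween W U k).toFinite.toFinset)
    (fun F R : Submodule K V => R ≤ F) using 2 with F _ R _
  · rw [Set.ncard_eq_toFinset_card _ (Set.toFinite _)]
    congr 1
    ext R
    simp only [Set.Finite.mem_toFinset, Finset.mem_bipartiteAbove, subspacesBetween,
      Set.mem_ofPred_eq, le_inf_iff]
    tauto
  · rw [Set.ncard_eq_toFinset_card _ (Set.toFinite _)]
    congr 1
    ext F
    simp [Finset.mem_bipartiteBelow]

theorem sum_ncard_subspacesBetween_eq_mul {𝒜 : Set (Submodule K V)} {W U : Submodule K V} {k : ℕ}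
    {y : ℚ} (hy : ∀ R ∈ subspacesBetween W U k, ({F ∈ 𝒜 | R ≤ F}.ncard : ℚ) = y) :
    ∑ F ∈ 𝒜.toFinite.toFinset, ((subspacesBetween W (F ⊓ U) k).ncard : ℚ) =
      (subspacesBetween W U k).ncard * y := by
  rw [← Nat.cast_sum, sum_ncard_subspacesBetween, Nat.cast_sum,
    Finset.sum_congr rfl fun R hR => hy R ((Set.Finite.mem_toFinset _).1 hR), Finset.sum_const,
    nsmul_eq_mul, ← Set.ncard_eq_toFinset_card]

theorem ncard_mul_eq_ncard_subspacesBetween_mul {𝒜 : Set (Submodule K V)}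
    {W U : Submodule K V} {k : ℕ} {x y : ℚ}
    (hx : ∀ F ∈ 𝒜, ((subspacesBetween W (F ⊓ U) k).ncard : ℚ) = x)
    (hy : ∀ R ∈ subspacesBetween W U k, ({F ∈ 𝒜 | R ≤ F}.ncard : ℚ) = y) :
    𝒜.ncard * x = (subspacesBetween W U k).ncard * y := by
  rw [← sum_ncard_subspacesBetween_eq_mul hy,
    Finset.sum_congr rfl fun F hF => hx F ((Set.Finite.mem_toFinset _).1 hF), Finset.sum_const,
    nsmul_eq_mul, ← Set.ncard_eq_toFinset_card]

theorem ncard_coe_sdiff_coe {W S : Submodule K V} (hWS : W ≤ S) :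
    ((S : Set V) \ W).ncard = Nat.card K ^ finrank K S - Nat.card K ^ finrank K W := by
  rw [Set.ncard_sdiff hWS (Set.toFinite _), ← Module.natCard_eq_pow_finrank,
    ← Module.natCard_eq_pow_finrank]
  rfl

theorem ncard_subspacesBetween_succ_mul {W U : Submodule K V} (hWU : W ≤ U) :
    (subspacesBetween W U (finrank K W + 1)).ncard *
        (Nat.card K ^ (finrank K W + 1) - Nat.card K ^ finrank K W) =
      Nat.card K ^ finrank K U - Nat.card K ^ finrank K W := by
  classical
  have hmaps : Set.MapsTo (fun v => W ⊔ Submodule.span K {v})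
      (((U : Set V) \ W).toFinite.toFinset : Set V)
      ((subspacesBetween W U (finrank K W + 1)).toFinite.toFinset : Set (Submodule K V)) := by
    intro v hv
    simp only [Set.Finite.coe_toFinset] at hv ⊢
    exact ⟨le_sup_left, sup_le hWU ((Submodule.span_singleton_le_iff_mem v U).2 hv.1),
      Submodule.finrank_sup_span_singleton hv.2⟩
  rw [← ncard_coe_sdiff_coe hWU, Set.ncard_eq_toFinset_card _ (Set.toFinite _),
    Set.ncard_eq_toFinset_card _ (Set.toFinite _), Finset.card_eq_sum_card_fiberwise hmaps,
    Finset.sum_const_nat]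
  intro S hS
  obtain ⟨hWS, hSU, hdim⟩ := (Set.Finite.mem_toFinset _).1 hS
  rw [← hdim, ← ncard_coe_sdiff_coe hWS, Set.ncard_eq_toFinset_card _ (Set.toFinite _)]
  congr 1
  ext v
  simp only [Finset.mem_filter, Set.Finite.mem_toFinset, Set.mem_sdiff, SetLike.mem_coe]
  constructor
  · rintro ⟨⟨-, hvW⟩, rfl⟩
    exact ⟨Submodule.mem_sup_right (Submodule.mem_span_singleton_self v), hvW⟩
  · rintro ⟨hvS, hvW⟩
    exact ⟨⟨hSU hvS, hvW⟩, sup_span_singleton_eq_of_finrank_eq_succ hWS hdim hvS hvW⟩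

variable [Finite K]

theorem ncard_subspacesBetween_succ {W U : Submodule K V} (hWU : W ≤ U) :
    ((subspacesBetween W U (finrank K W + 1)).ncard : ℚ) =
      gaussBinom (Nat.card K) (finrank K U - finrank K W) 1 := by
  have hq : 1 < Nat.card K := Finite.one_lt_card
  have hle : finrank K W ≤ finrank K U := Submodule.finrank_mono hWU
  have hcount := congrArg (Nat.cast (R := ℚ)) (ncard_subspacesBetween_succ_mul hWU)
  rw [Nat.cast_mul, Nat.cast_sub (Nat.pow_le_pow_right hq.le (Nat.le_add_right _ 1)),
    Nat.cast_sub (Nat.pow_le_pow_right hq.le hle)] at hcount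
  push_cast at hcount
  have hsplit : (Nat.card K : ℚ) ^ finrank K U =
      (Nat.card K : ℚ) ^ finrank K W * (Nat.card K : ℚ) ^ (finrank K U - finrank K W) := by
    rw [← pow_add, Nat.add_sub_cancel' hle]
  have hpow : ((Nat.card K : ℚ) ^ finrank K W) ≠ 0 := by positivity
  rw [gaussBinom_one_right, eq_div_iff (natCast_sub_one_pos hq).ne']
  refine mul_left_cancel₀ hpow ?_
  rw [hsplit] at hcount
  linear_combination hcount

theorem ncard_subspacesBetween_add {W U : Submodule K V} (hWU : W ≤ U) (k : ℕ) :
    ((subspacesBetween W U (finrank K W + k)).ncard : ℚ) =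
      gaussBinom (Nat.card K) (finrank K U - finrank K W) k := by
  induction k generalizing W with
  | zero =>
    have : subspacesBetween W U (finrank K W + 0) = {W} := by
      ext S
      refine ⟨fun hS => (Submodule.eq_of_le_of_finrank_eq hS.1 hS.2.2.symm).symm, ?_⟩
      rintro rfl
      exact ⟨le_rfl, hWU, rfl⟩
    rw [this, Set.ncard_singleton, gaussBinom_zero_right, Nat.cast_one]
  | succ k ih =>
    have hq : 1 < Nat.card K := Finite.one_lt_card
    have hcount : ((subspacesBetween W U (finrank K W + (k + 1))).ncard : ℚ) *
          gaussBinom (Nat.card K) (k + 1) 1 =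
        (subspacesBetween W U (finrank K W + 1)).ncard *
          gaussBinom (Nat.card K) (finrank K U - finrank K W - 1) k := by
      refine ncard_mul_eq_ncard_subspacesBetween_mul (fun F hF => ?_) (fun R hR => ?_)
      · obtain ⟨hWF, hFU, hdim⟩ := hF
        rw [inf_eq_left.2 hFU, ncard_subspacesBetween_succ hWF, hdim, Nat.add_sub_cancel_left]
      · obtain ⟨hWR, hRU, hdim⟩ := hR
        rw [Nat.sub_sub, ← hdim, ← ih hRU]
        congr 2
        ext F
        constructor
        · rintro ⟨⟨-, hFU, hF⟩, hRF⟩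
          exact ⟨hRF, hFU, by omega⟩
        · rintro ⟨hRF, hFU, hF⟩
          exact ⟨⟨hWR.trans hRF, hFU, by omega⟩, hRF⟩
    have hden := (natCast_pow_sub_one_pos hq k.succ_ne_zero).ne'
    have hden₁ := (natCast_sub_one_pos hq).ne'
    rw [ncard_subspacesBetween_succ hWU, gaussBinom_one_right, gaussBinom_one_right] at hcount
    rw [gaussBinom_succ_right]
    field_simp at hcount ⊢
    exact hcount

end SubspacesBetween

section IsotropicSubspaces

variable {f : LinearMap.BilinForm K V} {S T M : Submodule K V}

theorem TotallyIsotropic.mono (hM : TotallyIsotropic f M) (hTM : T ≤ M) : TotallyIsotropic f T :=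
  fun x hx y hy => hM x (hTM hx) y (hTM hy)

theorem TotallyIsotropic.le_orthogonal (hT : TotallyIsotropic f T) : T ≤ f.orthogonal T :=
  fun y hy x hx => hT x hx y hy

theorem TotallyIsotropic.finrank_le [FiniteDimensional K V] {ν : ℕ} (hT : TotallyIsotropic f T)
    (hnd : f.Nondegenerate) (hV : finrank K V = 2 * ν) : finrank K T ≤ ν := by
  have hle := Submodule.finrank_mono hT.le_orthogonal
  rw [LinearMap.BilinForm.finrank_orthogonal hnd, hV] at hle
  omega

theorem TotallyIsotropic.of_mem_subspacesBetween_orthogonal [FiniteDimensional K V]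
    (hT : TotallyIsotropic f T) (halt : f.IsAlt)
    (hS : S ∈ subspacesBetween T (f.orthogonal T) (finrank K T + 1)) : TotallyIsotropic f S := by
  obtain ⟨hTS, hSorth, hdim⟩ := hS
  obtain ⟨v, hvS, hvT⟩ : ∃ v ∈ S, v ∉ T := by
    by_contra! hST
    have := Submodule.finrank_mono (show S ≤ T from hST)
    omega
  rw [← sup_span_singleton_eq_of_finrank_eq_succ hTS hdim hvS hvT]
  intro x hx y hy
  obtain ⟨x', hx', _, hcv, rfl⟩ := Submodule.mem_sup.1 hx
  obtain ⟨y', hy', _, hdv, rfl⟩ := Submodule.mem_sup.1 hy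
  obtain ⟨c, rfl⟩ := Submodule.mem_span_singleton.1 hcv
  obtain ⟨d, rfl⟩ := Submodule.mem_span_singleton.1 hdv
  have hxv : f x' v = 0 := hSorth hvS x' hx'
  have hvy : f v y' = 0 := halt.isRefl _ _ (hSorth hvS y' hy')
  simp [hT x' hx' y' hy', hxv, hvy, halt v]

theorem sep_C3_of_le {m : ℕ} (hTS : T ≤ S) : {F ∈ C3 f T m | S ≤ F} = C3 f S m :=
  Set.ext fun _ => ⟨fun hF => ⟨hF.1.1, hF.2⟩, fun hF => ⟨⟨hF.1, hTS.trans hF.2⟩, hF.2⟩⟩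

theorem C3_bot (f : LinearMap.BilinForm K V) (m : ℕ) : C3 f ⊥ m = polar f m := by
  simp [C3]

theorem C3_finrank [FiniteDimensional K V] (hT : TotallyIsotropic f T) :
    C3 f T (finrank K T) = {T} := by
  ext F
  refine ⟨fun hF => (Submodule.eq_of_le_of_finrank_eq hF.2 hF.1.2.symm).symm, ?_⟩
  rintro rfl
  exact ⟨⟨hT, rfl⟩, le_rfl⟩

variable [Finite K] [Finite V] {ν m : ℕ}

theorem ncard_C3 (halt : f.IsAlt) (hnd : f.Nondegenerate) (hV : finrank K V = 2 * ν)
    (hT : TotallyIsotropic f T) (hm : finrank K T ≤ m) :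
    ((C3 f T m).ncard : ℚ) = Nprime (Nat.card K) (finrank K T) m ν := by
  obtain ⟨k, rfl⟩ := Nat.exists_eq_add_of_le hm
  induction k generalizing T with
  | zero =>
    rw [add_zero, C3_finrank hT, Set.ncard_singleton, Nprime_self, Nat.cast_one]
  | succ k ih =>
    have hq : 1 < Nat.card K := Finite.one_lt_card
    have hν := hT.finrank_le hnd hV
    have hcount : ((C3 f T (finrank K T + (k + 1))).ncard : ℚ) *
          gaussBinom (Nat.card K) (k + 1) 1 =
        (subspacesBetween T (f.orthogonal T) (finrank K T + 1)).ncard *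
          Nprime (Nat.card K) (finrank K T + 1) (finrank K T + (k + 1)) ν := by
      refine ncard_mul_eq_ncard_subspacesBetween_mul (fun F hF => ?_) (fun R hR => ?_)
      · obtain ⟨⟨hiso, hdim⟩, hTF⟩ := hF
        have hF : F ≤ f.orthogonal T := fun y hy x hx => hiso x (hTF hx) y hy
        rw [inf_eq_left.2 hF, ncard_subspacesBetween_succ hTF, hdim, Nat.add_sub_cancel_left]
      · have hdim := hR.2.2
        rw [sep_C3_of_le hR.1, add_comm k 1, ← add_assoc, ← hdim]
        exact ih (hT.of_mem_subspacesBetween_orthogonal halt hR) (Nat.le_add_right _ _)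
    have hden := (natCast_pow_sub_one_pos hq k.succ_ne_zero).ne'
    have hden₁ := (natCast_sub_one_pos hq).ne'
    rw [ncard_subspacesBetween_succ hT.le_orthogonal,
      LinearMap.BilinForm.finrank_orthogonal hnd, hV,
      show 2 * ν - finrank K T - finrank K T = 2 * (ν - finrank K T) by omega,
      gaussBinom_one_right, gaussBinom_one_right] at hcount
    rw [Nprime_eq_mul_Nprime_succ (by omega) hν, Nat.add_sub_cancel_left]
    field_simp at hcount ⊢
    exact hcount

theorem sum_gaussBinom_finrank_inf (halt : f.IsAlt) (hnd : f.Nondegenerate)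
    (hV : finrank K V = 2 * ν) (hM : TotallyIsotropic f M) (hTM : T ≤ M) {k : ℕ}
    (hkm : finrank K T + k ≤ m) :
    ∑ F ∈ (C3 f T m).toFinite.toFinset,
        gaussBinom (Nat.card K) (finrank K ↥(F ⊓ M) - finrank K T) k =
      gaussBinom (Nat.card K) (finrank K M - finrank K T) k *
        Nprime (Nat.card K) (finrank K T + k) m ν := by
  rw [← ncard_subspacesBetween_add hTM, ← sum_ncard_subspacesBetween_eq_mul (𝒜 := C3 f T m)]
  · refine Finset.sum_congr rfl fun F hF => ?_
    have hTF := ((Set.Finite.mem_toFinset _).1 hF).2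
    rw [ncard_subspacesBetween_add (le_inf hTF hTM)]
  · rintro R ⟨hTR, hRM, hdim⟩
    rw [sep_C3_of_le hTR, ncard_C3 halt hnd hV (hM.mono hRM) (hdim ▸ hkm), hdim]

end IsotropicSubspaces

section Families

theorem ncard_sep_eq_sum_ite {α : Type*} [Finite α] (s : Set α) (p : α → Prop)
    [DecidablePred p] :
    ({x ∈ s | p x}.ncard : ℚ) = ∑ x ∈ s.toFinite.toFinset, if p x then 1 else 0 := by
  rw [Finset.sum_boole, Set.ncard_eq_toFinset_card _ (Set.toFinite _)]
  congr 2
  ext x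
  simp

variable {f : LinearMap.BilinForm K V} {S T M : Submodule K V} {ν m s t : ℕ}

theorem gaussBinom_finrank_inf_eq [Finite K] [FiniteDimensional K V]
    (hS : finrank K S = t + 1) (F : Submodule K V) [Decidable (S ≤ F)] :
    gaussBinom (Nat.card K) (finrank K ↥(F ⊓ S)) t =
      (if t ≤ finrank K ↥(F ⊓ S) then 1 else 0) +
        (gaussBinom (Nat.card K) (t + 1) 1 - 1) * if S ≤ F then 1 else 0 := by
  have hq : 1 < Nat.card K := Finite.one_lt_card
  have hle : finrank K ↥(F ⊓ S) ≤ t + 1 := hS ▸ Submodule.finrank_mono inf_le_right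
  have hiff : S ≤ F ↔ finrank K ↥(F ⊓ S) = t + 1 := by
    rw [← inf_eq_right, ← hS]
    exact ⟨fun h => by rw [h], Submodule.eq_of_le_of_finrank_eq inf_le_right⟩
  rcases lt_trichotomy (finrank K ↥(F ⊓ S)) t with hlt | heq | hgt
  · rw [gaussBinom_eq_zero_of_lt hlt, if_neg (by omega), if_neg (by rw [hiff]; omega)]
    norm_num
  · rw [heq, gaussBinom_self hq, if_pos le_rfl, if_neg (by rw [hiff]; omega)]
    norm_num
  · have hdim : finrank K ↥(F ⊓ S) = t + 1 := by omega
    rw [hdim, gaussBinom_succ_self hq, if_pos (Nat.le_succ t), if_pos (hiff.2 hdim)]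
    ring

variable [Finite V]

theorem ncard_C1 (f : LinearMap.BilinForm K V) (M T : Submodule K V) (m t : ℕ) :
    ((C1 f M T m t).ncard : ℚ) =
      ∑ F ∈ (C3 f T m).toFinite.toFinset, if t + 1 ≤ finrank K ↥(F ⊓ M) then 1 else 0 := by
  rw [← ncard_sep_eq_sum_ite]
  congr 2
  ext F
  exact and_assoc.symm

variable [Finite K]

theorem ncard_C1_le (halt : f.IsAlt) (hnd : f.Nondegenerate) (hV : finrank K V = 2 * ν)
    (hM : M ∈ polar f s) (hTM : T ≤ M) (hT : finrank K T = t) (htm : t + 1 ≤ m) :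
    ((C1 f M T m t).ncard : ℚ) ≤
      gaussBinom (Nat.card K) (s - t) 1 * Nprime (Nat.card K) (t + 1) m ν := by
  have hq : 1 < Nat.card K := Finite.one_lt_card
  subst hT
  rw [ncard_C1, ← hM.2, ← sum_gaussBinom_finrank_inf halt hnd hV hM.1 hTM htm]
  refine Finset.sum_le_sum fun F _ => ?_
  split_ifs with hF
  · obtain ⟨n, hn⟩ := Nat.exists_eq_add_of_le hF
    rw [show finrank K ↥(F ⊓ M) - finrank K T = n + 1 by omega]
    exact one_le_gaussBinom_one_succ hq n
  · exact gaussBinom_one_nonneg hq _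

theorem s0_le_ncard_C1 (halt : f.IsAlt) (hnd : f.Nondegenerate) (hV : finrank K V = 2 * ν)
    (hM : M ∈ polar f s) (hTM : T ≤ M) (hT : finrank K T = t) (htm : t + 2 ≤ m) :
    s0 (Nat.card K) ν m s t ≤ (C1 f M T m t).ncard := by
  subst hT
  rw [ncard_C1, s0, ← hM.2,
    ← sum_gaussBinom_finrank_inf halt hnd hV hM.1 hTM (Nat.le_of_succ_le htm), mul_assoc,
    ← sum_gaussBinom_finrank_inf halt hnd hV hM.1 hTM htm, Finset.mul_sum,
    ← Finset.sum_sub_distrib]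
  refine Finset.sum_le_sum fun F _ => ?_
  split_ifs with hF
  · exact gaussBinom_one_sub_mul_gaussBinom_two_le_one Finite.one_lt_card _
  · rw [gaussBinom_eq_zero_of_lt (by omega), gaussBinom_eq_zero_of_lt (by omega)]
    norm_num

theorem ncard_C2_le (halt : f.IsAlt) (hnd : f.Nondegenerate) (hV : finrank K V = 2 * ν)
    (hM : M ∈ polar f (m + 1)) (hTM : T ≤ M) (hT : finrank K T = t) (htm : t ≤ m) :
    ((C2 f M T m).ncard : ℚ) ≤
      Nprime (Nat.card K) t m ν + gaussBinom (Nat.card K) (m + 1) 1 := by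
  have hbelow : {F | F ∈ polar f m ∧ F ≤ M} ⊆
      subspacesBetween ⊥ M (finrank K (⊥ : Submodule K V) + m) := by
    rintro F ⟨⟨-, hdim⟩, hFM⟩
    exact ⟨bot_le, hFM, by rw [finrank_bot, zero_add, hdim]⟩
  have hcard := (Set.ncard_union_le (C3 f T m) {F | F ∈ polar f m ∧ F ≤ M}).trans
    (Nat.add_le_add_left (Set.ncard_le_ncard hbelow) _)
  rw [← gaussBinom_succ_self Finite.one_lt_card, ← hT,
    ← ncard_C3 halt hnd hV (hM.1.mono hTM) (hT ▸ htm), ← hM.2]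
  have hcount := ncard_subspacesBetween_add (bot_le (a := M)) m
  rw [finrank_bot, Nat.sub_zero] at hcount
  rw [← hcount]
  rw [finrank_bot] at hcard
  exact_mod_cast hcard

theorem Nprime_le_ncard_C2 (halt : f.IsAlt) (hnd : f.Nondegenerate) (hV : finrank K V = 2 * ν)
    (hTiso : TotallyIsotropic f T) (hT : finrank K T = t) (htm : t ≤ m) (M : Submodule K V) :
    Nprime (Nat.card K) t m ν ≤ (C2 f M T m).ncard := by
  subst hT
  rw [← ncard_C3 halt hnd hV hTiso htm]
  exact_mod_cast Set.ncard_le_ncard (s := C3 f T m) (t := C2 f M T m) Set.subset_union_left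

theorem ncard_C4 (halt : f.IsAlt) (hnd : f.Nondegenerate) (hV : finrank K V = 2 * ν)
    (hS : S ∈ polar f (t + 1)) (htm : t + 1 ≤ m) :
    ((C4 f S m t).ncard : ℚ) =
      gaussBinom (Nat.card K) (t + 1) 1 * Nprime (Nat.card K) t m ν -
        (gaussBinom (Nat.card K) (t + 1) 1 - 1) * Nprime (Nat.card K) (t + 1) m ν := by
  classical
  have hC4 : ((C4 f S m t).ncard : ℚ) = ∑ F ∈ (polar f m).toFinite.toFinset,
      if t ≤ finrank K ↥(F ⊓ S) then 1 else 0 := ncard_sep_eq_sum_ite _ _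
  have hC3 : ((C3 f S m).ncard : ℚ) = ∑ F ∈ (polar f m).toFinite.toFinset,
      if S ≤ F then 1 else 0 := ncard_sep_eq_sum_ite _ _
  have hsum := sum_gaussBinom_finrank_inf (m := m) (k := t) halt hnd hV hS.1 bot_le
    (by rw [finrank_bot]; omega)
  simp only [finrank_bot, Nat.sub_zero, zero_add, C3_bot, hS.2] at hsum
  rw [gaussBinom_succ_self Finite.one_lt_card,
    Finset.sum_congr rfl fun F _ => gaussBinom_finrank_inf_eq hS.2 F, Finset.sum_add_distrib,
    ← Finset.mul_sum, ← hC4, ← hC3, ncard_C3 halt hnd hV hS.1 (hS.2 ▸ htm), hS.2] at hsum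
  linear_combination hsum

theorem ncard_C1_mul_ncard_C2_lt {m₁ m₂ : ℕ} {M' T' : Submodule K V} (halt : f.IsAlt)
    (hnd : f.Nondegenerate) (hV : finrank K V = 2 * ν) (hm : m₂ < m₁) (hmt : t + 1 ≤ m₂)
    (hν : 2 * m₁ + m₂ + 2 ≤ 2 * ν)
    (hM : M ∈ polar f (m₂ + 1)) (hTM : T ≤ M) (hT : finrank K T = t)
    (hM' : M' ∈ polar f (m₁ + 1)) (hTM' : T' ≤ M') (hT' : finrank K T' = t) :
    (C1 f M' T' m₂ t).ncard * (C2 f M' T' m₁).ncard <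
      (C1 f M T m₁ t).ncard * (C2 f M T m₂).ncard := by
  have hq : 1 < Nat.card K := Finite.one_lt_card
  rw [← Nat.cast_lt (α := ℚ), Nat.cast_mul, Nat.cast_mul]
  calc ((C1 f M' T' m₂ t).ncard : ℚ) * (C2 f M' T' m₁).ncard
      ≤ gaussBinom (Nat.card K) (m₁ + 1 - t) 1 * Nprime (Nat.card K) (t + 1) m₂ ν *
          (Nprime (Nat.card K) t m₁ ν + gaussBinom (Nat.card K) (m₁ + 1) 1) :=
        mul_le_mul (ncard_C1_le halt hnd hV hM' hTM' hT' hmt)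
          (ncard_C2_le halt hnd hV hM' hTM' hT' (by omega)) (Nat.cast_nonneg _)
          (mul_nonneg (gaussBinom_one_nonneg hq _) (Nprime_pos hq (by omega)).le)
    _ < s0 (Nat.card K) ν m₁ (m₂ + 1) t * Nprime (Nat.card K) t m₂ ν :=
        gaussBinom_mul_Nprime_lt_s0_mul_Nprime hq hmt hm hν
    _ ≤ (C1 f M T m₁ t).ncard * (C2 f M T m₂).ncard :=
        mul_le_mul (s0_le_ncard_C1 halt hnd hV hM hTM hT (by omega))
          (Nprime_le_ncard_C2 halt hnd hV (hM.1.mono hTM) hT (by omega) M)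
          (Nprime_pos hq (by omega)).le (Nat.cast_nonneg _)

theorem ncard_C3_mul_ncard_C4_lt {m₁ m₂ : ℕ} (halt : f.IsAlt) (hnd : f.Nondegenerate)
    (hV : finrank K V = 2 * ν) (hm : m₂ < m₁) (hmt : t + 1 ≤ m₂) (hν : m₁ ≤ ν)
    (hS : S ∈ polar f (t + 1)) :
    (C3 f S m₂).ncard * (C4 f S m₁ t).ncard < (C3 f S m₁).ncard * (C4 f S m₂ t).ncard := by
  have hq : 1 < Nat.card K := Finite.one_lt_card
  rw [← Nat.cast_lt (α := ℚ), Nat.cast_mul, Nat.cast_mul,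
    ncard_C3 halt hnd hV hS.1 (hS.2 ▸ hmt),
    ncard_C3 halt hnd hV hS.1 (hS.2 ▸ hmt.trans hm.le), hS.2, ncard_C4 halt hnd hV hS hmt,
    ncard_C4 halt hnd hV hS (by omega)]
  linear_combination mul_lt_mul_of_pos_left (Nprime_succ_mul_Nprime_lt hq hmt hm hν)
    (gaussBinom_one_pos hq t.succ_ne_zero)

end Families

theorem stmt_17_general [Finite K] {f : LinearMap.BilinForm K V} (halt : f.IsAlt)
    (hnd : f.Nondegenerate) {ν m₁ m₂ t : ℕ} (hV : finrank K V = 2 * ν)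
    (hm : m₂ < m₁) (hmt : t + 1 ≤ m₂) (hdim : 2 * m₁ + m₂ + 2 ≤ 2 * ν)
    {M T M' T' S : Submodule K V}
    (hM : M ∈ polar f (m₂ + 1)) (hTM : T ≤ M) (hT : finrank K T = t)
    (hM' : M' ∈ polar f (m₁ + 1)) (hTM' : T' ≤ M') (hT' : finrank K T' = t)
    (hS : S ∈ polar f (t + 1)) :
    (C1 f M' T' m₂ t).ncard * (C2 f M' T' m₁).ncard <
        (C1 f M T m₁ t).ncard * (C2 f M T m₂).ncard ∧
      (C3 f S m₂).ncard * (C4 f S m₁ t).ncard <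
        (C3 f S m₁).ncard * (C4 f S m₂ t).ncard := by
  have : FiniteDimensional K V := FiniteDimensional.of_finrank_pos (by omega)
  have : Finite V := Module.finite_of_finite K
  exact ⟨ncard_C1_mul_ncard_C2_lt halt hnd hV hm hmt hdim hM hTM hT hM' hTM' hT',
    ncard_C3_mul_ncard_C4_lt halt hnd hV hm hmt (by omega) hS⟩

theorem stmt_17
    (q ν m₁ m₂ t : ℕ) (hq : IsPrimePow q)
    {K : Type} [Field K] [Fintype K] (hK : Fintype.card K = q)
    (f : (Fin (2 * ν) → K) →ₗ[K] (Fin (2 * ν) → K) →ₗ[K] K)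
    (halt : ∀ v, f v v = 0)
    (hnd : ∀ v, (∀ w, f v w = 0) → v = 0)
    (hν : 0 < ν) (ht : 0 < t) (hm : m₂ < m₁) (hmt : t + 1 ≤ m₂)
    (hdim : 2 * m₁ + m₂ + 2 ≤ 2 * ν)
    (M : Submodule K (Fin (2 * ν) → K)) (hM : M ∈ polar f (m₂ + 1))
    (T : Submodule K (Fin (2 * ν) → K)) (hTM : T ≤ M) (hT : finrank K T = t)
    (M' : Submodule K (Fin (2 * ν) → K)) (hM' : M' ∈ polar f (m₁ + 1))
    (T' : Submodule K (Fin (2 * ν) → K)) (hTM' : T' ≤ M') (hT' : finrank K T' = t)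
    (S : Submodule K (Fin (2 * ν) → K)) (hS : S ∈ polar f (t + 1)) :
    (C1 f M' T' m₂ t).ncard * (C2 f M' T' m₁).ncard <
        (C1 f M T m₁ t).ncard * (C2 f M T m₂).ncard ∧
      (C3 f S m₂).ncard * (C4 f S m₁ t).ncard <
        (C3 f S m₁).ncard * (C4 f S m₂ t).ncard := by
  have hnd' : LinearMap.BilinForm.Nondegenerate f :=
    (LinearMap.BilinForm.IsAlt.isRefl halt).nondegenerate_iff_separatingLeft.2 hnd
  exact stmt_17_general halt hnd' (by simp) hm hmt hdim hM hTM hT hM' hTM' hT' hS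

end
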